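/- Let (X, Y, Z) be jointly Gaussian random vectors, all with values in ℝ^d and mean zero, and let P = diag(ρ_1, …, ρ_d) be a diagonal d×d real matrix. Suppose Cov(Y) is invertible, Z is conditionally independent of X given Y, and Cov(Z, Y) = P·Cov(Y, Y). Let I = {i_1, …, i_m} be a nonempty subset of {1, …, d} such that the covariance matrix Cov(Y_I) of the sub-vector Y_I = (Y_{i_1}, …, Y_{i_m}) is invertible. Then Z_I is conditionally independent of X_I given Y_I. -/

import Mathlib

open MeasureTheory ProbabilityTheory

/-- The cross-covariance matrix of two random vectors: entry `(i, j)` is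
`E[Xᵢ Yⱼ] − E[Xᵢ] E[Yⱼ]`. -/
noncomputable def covM {Ω : Type*} [MeasurableSpace Ω] (μ : Measure Ω)
    {ι κ : Type*} (X : Ω → ι → ℝ) (Y : Ω → κ → ℝ) : Matrix ι κ ℝ :=
  Matrix.of fun i j =>
    (∫ ω, X ω i * Y ω j ∂μ) - (∫ ω, X ω i ∂μ) * (∫ ω, Y ω j ∂μ)

/-- A random vector (indexed by a finite type) is (jointly) Gaussian if every linear
combination of its components has a Gaussian distribution on `ℝ`. -/
def IsGaussianVec {Ω : Type*} [MeasurableSpace Ω] (μ : Measure Ω)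
    {ι : Type*} [Fintype ι] (X : Ω → ι → ℝ) : Prop :=
  ∀ u : ι → ℝ, ∃ (a : ℝ) (s : NNReal),
    Measure.map (fun ω => ∑ i, u i * X ω i) μ = gaussianReal a s


theorem IsGaussianVec.hasGaussianLaw {Ω : Type*} [MeasurableSpace Ω] {μ : Measure Ω}
    {ι : Type*} [Fintype ι] {X : Ω → ι → ℝ} (h : IsGaussianVec μ X) (hX : Measurable X) :
    HasGaussianLaw X μ where
  isGaussian_map := by
    classical
    refine isGaussian_of_map_eq_gaussianReal fun L => ?_
    obtain ⟨a, s, has⟩ := h fun i => L (Pi.single i 1)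
    refine ⟨a, s, ?_⟩
    rw [Measure.map_map L.measurable hX, ← has]
    congr 1
    ext ω
    have hsum : X ω = ∑ i, X ω i • Pi.single i (1 : ℝ) := by
      simp [← Pi.single_smul, Finset.univ_sum_single]
    conv_lhs => rw [Function.comp_apply, hsum]
    simp [map_sum, mul_comm]

/-- Under conditional independence, the conditional expectation of a product factors. -/
theorem ProbabilityTheory.CondIndepFun.condExp_mul {Ω : Type*} {m mΩ : MeasurableSpace Ω}
    [StandardBorelSpace Ω] {hm : m ≤ mΩ} {μ : Measure Ω} [IsFiniteMeasure μ] {f g : Ω → ℝ}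
    (h : CondIndepFun m hm f g μ) (hf : Measurable f) (hg : Measurable g)
    (hfi : Integrable f μ) (hgi : Integrable g μ) (hfgi : Integrable (f * g) μ) :
    μ[f * g | m] =ᵐ[μ] μ[f | m] * μ[g | m] := by
  have hk := ae_eq_of_ae_eq_trim ((condIndepFun_iff_map_prod_eq_prod_map_map hf hg).1 h)
  filter_upwards [hk, condExp_ae_eq_integral_condExpKernel hm hfi,
    condExp_ae_eq_integral_condExpKernel hm hgi,
    condExp_ae_eq_integral_condExpKernel hm hfgi] with ω hω hf' hg' hfg'
  rw [Pi.mul_apply, hf', hg', hfg']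
  have hind : IndepFun f g (condExpKernel μ m ω) := by
    rw [indepFun_iff_map_prod_eq_prod_map_map hf.aemeasurable hg.aemeasurable]
    rwa [Kernel.map_apply _ (by fun_prop), Kernel.prod_apply, Kernel.map_apply _ hf,
      Kernel.map_apply _ hg] at hω
  exact hind.integral_mul_eq_mul_integral hf.aestronglyMeasurable hg.aestronglyMeasurable

section

variable {Ω α β γ δ : Type*} {mΩ : MeasurableSpace Ω} [MeasurableSpace α] [MeasurableSpace β]
  [MeasurableSpace γ] [MeasurableSpace δ] {μ : Measure Ω} [IsProbabilityMeasure μ]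

/-- If `W` and `k` are independent, the conditional law of `φ (W, k)` given `k = y` is the law of
`φ (W, y)`. -/
theorem ProbabilityTheory.IndepFun.condDistrib_comp_ae_eq [StandardBorelSpace β] [Nonempty β]
    {W : Ω → α} {k : Ω → γ} {φ : α × γ → β} (h : IndepFun W k μ) (hW : Measurable W)
    (hk : Measurable k) (hφ : Measurable φ) :
    condDistrib (fun ω => φ (W ω, k ω)) k μ =ᵐ[μ.map k]
      (Kernel.const γ (μ.map W) ×ₖ Kernel.id).map φ := by
  have : IsProbabilityMeasure (μ.map W) := Measure.isProbabilityMeasure_map hW.aemeasurable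
  have : IsMarkovKernel ((Kernel.const γ (μ.map W) ×ₖ Kernel.id).map φ) :=
    Kernel.IsMarkovKernel.map _ hφ
  refine (condDistrib_ae_eq_iff_measure_eq_compProd k
    (hφ.comp (hW.prodMk hk)).aemeasurable _).2 ?_
  refine Measure.ext_of_lintegral _ fun f hf => ?_
  have hkW := (indepFun_iff_map_prod_eq_prod_map_map hk.aemeasurable hW.aemeasurable).1 h.symm
  rw [Measure.lintegral_compProd hf, lintegral_map hf (hk.prodMk (hφ.comp (hW.prodMk hk)))]
  have hF : Measurable fun p : γ × α => f (p.1, φ (p.2, p.1)) := by fun_prop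
  have : ∫⁻ ω, f (k ω, φ (W ω, k ω)) ∂μ
      = ∫⁻ p, f (p.1, φ (p.2, p.1)) ∂(μ.map fun ω => (k ω, W ω)) :=
    (lintegral_map hF (hk.prodMk hW)).symm
  refine this.trans ?_
  rw [hkW, lintegral_prod _ hF.aemeasurable]
  refine lintegral_congr fun y => ?_
  have hG : Measurable fun b : β => f (y, b) := by fun_prop
  rw [Kernel.map_apply _ hφ, lintegral_map hG hφ, Kernel.prod_apply, Kernel.const_apply,
    Kernel.id_apply, Measure.prod_dirac, lintegral_map (hG.comp' hφ) (by fun_prop)]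

/-- If `W` is independent of `(k, g)`, then any function of `(W, k)` is conditionally independent
of `g` given `k`. -/
theorem ProbabilityTheory.IndepFun.condIndepFun_comp [StandardBorelSpace Ω]
    [StandardBorelSpace β] [Nonempty β] [StandardBorelSpace δ] [Nonempty δ]
    {W : Ω → α} {k : Ω → γ} {g : Ω → δ} {φ : α × γ → β}
    (h : IndepFun W (fun ω => (k ω, g ω)) μ) (hW : Measurable W)
    (hk : Measurable k) (hg : Measurable g) (hφ : Measurable φ) :
    CondIndepFun (MeasurableSpace.comap k inferInstance) hk.comap_le
      (fun ω => φ (W ω, k ω)) g μ := by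
  refine CondIndepFun.symm ?_
  refine (condIndepFun_iff_condDistrib_prod_ae_eq_prodMkRight (by fun_prop) hg hk).2 ?_
  have h₁ := h.condDistrib_comp_ae_eq (φ := fun p : α × γ × δ => φ (p.1, p.2.1)) hW
    (hk.prodMk hg) (by fun_prop)
  have hWk : IndepFun W k μ := h.comp measurable_id measurable_fst
  have h₂ := hWk.condDistrib_comp_ae_eq hW hk hφ
  have hmap : μ.map k = (μ.map fun ω => (k ω, g ω)).map Prod.fst := by
    rw [Measure.map_map measurable_fst (by fun_prop)]; rfl
  rw [hmap] at h₂
  filter_upwards [h₁, ae_of_ae_map measurable_fst.aemeasurable h₂] with p hp₁ hp₂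
  rw [hp₁, Kernel.prodMkRight_apply]
  refine Eq.trans ?_ hp₂.symm
  rw [Kernel.map_apply _ hφ, Kernel.map_apply _ (by fun_prop), Kernel.prod_apply,
    Kernel.prod_apply, Kernel.const_apply, Kernel.const_apply, Kernel.id_apply, Kernel.id_apply,
    Measure.prod_dirac, Measure.prod_dirac, Measure.map_map (by fun_prop) (by fun_prop),
    Measure.map_map hφ (by fun_prop)]
  rfl

end

/-- If `z` and `x` are conditionally independent given `Y`, `y` is a function of `Y`, and the
residual `z - y` is centred and independent of `Y`, then `z - y` is orthogonal to `x`. -/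
theorem integral_mul_eq_of_condIndepFun {Ω γ : Type*} {mΩ : MeasurableSpace Ω}
    [StandardBorelSpace Ω] [mγ : MeasurableSpace γ] {μ : Measure Ω} [IsProbabilityMeasure μ]
    {Y : Ω → γ} (hY : Measurable Y) {z x y : Ω → ℝ} (hz : Measurable z) (hx : Measurable x)
    (hy : Measurable[MeasurableSpace.comap Y mγ] y)
    (hz2 : MemLp z 2 μ) (hx2 : MemLp x 2 μ) (hy2 : MemLp y 2 μ)
    (h : CondIndepFun (MeasurableSpace.comap Y mγ) hY.comap_le z x μ)
    (hind : IndepFun (z - y) Y μ) (h0 : ∫ ω, (z - y) ω ∂μ = 0) :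
    ∫ ω, (z * x) ω ∂μ = ∫ ω, (y * x) ω ∂μ := by
  have hym : Measurable y := hy.mono hY.comap_le le_rfl
  have hzi := hz2.integrable one_le_two
  have hxi := hx2.integrable one_le_two
  have hyi := hy2.integrable one_le_two
  have hW : μ[z - y | MeasurableSpace.comap Y mγ] =ᵐ[μ] fun _ => μ[z - y] :=
    condExp_indep_eq (hz.sub hym).comap_le hY.comap_le
      (comap_measurable (z - y)).stronglyMeasurable hind
  have hZ : μ[z | MeasurableSpace.comap Y mγ] =ᵐ[μ] y := by
    filter_upwards [hW, condExp_sub hzi hyi (MeasurableSpace.comap Y mγ)] with ω h₁ h₂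
    rw [h₁, h0, Pi.sub_apply, condExp_of_stronglyMeasurable hY.comap_le hy.stronglyMeasurable hyi]
      at h₂
    linarith
  rw [← integral_condExp hY.comap_le, ← integral_condExp hY.comap_le (f := y * x)]
  refine integral_congr_ae ?_
  filter_upwards [h.condExp_mul hz hx hzi hxi (hz2.integrable_mul hx2), hZ,
    condExp_mul_of_stronglyMeasurable_left hy.stronglyMeasurable (hy2.integrable_mul hx2) hxi]
    with ω h₁ h₂ h₃
  rw [h₁, h₃, Pi.mul_apply, Pi.mul_apply, h₂]

/-- For jointly Gaussian mean-zero random vectors `(X, Y, Z)` in `ℝ^d` with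
`Cov(Y)` invertible, a diagonal matrix `P = diag(ρ)`, `Z ⟂ X | Y` and `Cov(Z,Y) = P·Cov(Y,Y)`:
for any nonempty subset `I ⊆ {1,…,d}` (encoded by an injective `e : Fin m → Fin d`, `m ≥ 1`)
with `Cov(Y_I)` invertible, the sub-vectors satisfy `Z_I ⟂ X_I | Y_I`. -/
theorem gaussian_switch_condIndep_closed_under_margins
    {Ω : Type*} [MeasurableSpace Ω] [StandardBorelSpace Ω]
    (Pr : Measure Ω) [IsProbabilityMeasure Pr]
    {d : ℕ}
    (X Y Z : Ω → Fin d → ℝ)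
    (hX : Measurable X) (hY : Measurable Y) (hZ : Measurable Z)
    (hGauss : IsGaussianVec Pr
      (fun ω => Sum.elim (Sum.elim (X ω) (Y ω)) (Z ω)))
    (hmX : ∀ i, ∫ ω, X ω i ∂Pr = 0)
    (hmY : ∀ i, ∫ ω, Y ω i ∂Pr = 0)
    (hmZ : ∀ i, ∫ ω, Z ω i ∂Pr = 0)
    (ρ : Fin d → ℝ)
    (hYinv : IsUnit (covM Pr Y Y))
    (hCI : CondIndepFun (MeasurableSpace.comap Y inferInstance) hY.comap_le Z X Pr)
    (hcov : covM Pr Z Y = Matrix.diagonal ρ * covM Pr Y Y)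
    {m : ℕ} (hm : 0 < m) (e : Fin m → Fin d) (he : Function.Injective e)
    (hYIinv : IsUnit (covM Pr (fun ω j => Y ω (e j)) (fun ω j => Y ω (e j)))) :
    CondIndepFun
      (MeasurableSpace.comap (fun ω (j : Fin m) => Y ω (e j)) inferInstance)
      ((measurable_pi_lambda _ fun j => (measurable_pi_apply (e j)).comp hY).comap_le)
      (fun ω j => Z ω (e j)) (fun ω j => X ω (e j)) Pr := by
  have hT := hGauss.hasGaussianLaw
    (measurable_pi_iff.2 (by rintro ((i | i) | i) <;> simp only [Sum.elim_inl, Sum.elim_inr] <;>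
      fun_prop))
  have hX2 (i : Fin d) : MemLp (fun ω => X ω i) 2 Pr := (hT.eval (Sum.inl (Sum.inl i))).memLp_two
  have hY2 (i : Fin d) : MemLp (fun ω => Y ω i) 2 Pr := (hT.eval (Sum.inl (Sum.inr i))).memLp_two
  have hZ2 (i : Fin d) : MemLp (fun ω => Z ω i) 2 Pr := (hT.eval (Sum.inr i)).memLp_two
  have hYρ2 (i : Fin d) : MemLp (fun ω => ρ i * Y ω i) 2 Pr := (hY2 i).const_mul _
  have hW2 (i : Fin d) : MemLp (fun ω => Z ω i - ρ i * Y ω i) 2 Pr := (hZ2 i).sub (hYρ2 i)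
  have hWm : ∀ i, ∫ ω, (Z ω i - ρ i * Y ω i) ∂Pr = 0 := fun i => by
    rw [integral_sub ((hZ2 i).integrable one_le_two) ((hYρ2 i).integrable one_le_two),
      integral_const_mul, hmZ, hmY]
    simp
  have hpair : HasGaussianLaw (fun ω => (fun i => Z ω i - ρ i * Y ω i,
      fun j : Fin d ⊕ Fin d => Sum.elim (Y ω) (X ω) j)) Pr := by
    refine (hT.map_fun ((ContinuousLinearMap.pi fun i =>
      ContinuousLinearMap.proj (R := ℝ) (φ := fun _ : (Fin d ⊕ Fin d) ⊕ Fin d => ℝ) (Sum.inr i)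
        - ρ i • ContinuousLinearMap.proj (Sum.inl (Sum.inr i))).prod
      (ContinuousLinearMap.pi fun j : Fin d ⊕ Fin d =>
        ContinuousLinearMap.proj (Sum.inl j.swap)))).congr (ae_of_all _ fun ω => ?_)
    exact Prod.ext rfl (funext (by rintro (j | j) <;> rfl))
  have hWcov {v : Ω → ℝ} (i : Fin d) (hv : MemLp v 2 Pr)
      (h : ∫ ω, Z ω i * v ω ∂Pr = ∫ ω, ρ i * Y ω i * v ω ∂Pr) :
      cov[fun ω => Z ω i - ρ i * Y ω i, v; Pr] = 0 := by
    rw [covariance_eq_sub (hW2 i) hv, hWm, zero_mul, sub_zero]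
    have hsub := integral_sub ((hZ2 i).integrable_mul hv) ((hYρ2 i).integrable_mul hv)
    simp only [Pi.mul_apply] at hsub
    simp only [Pi.mul_apply, sub_mul]
    rw [hsub, h, sub_self]
  have hWYcov : ∀ i j, cov[fun ω => Z ω i - ρ i * Y ω i, fun ω => Y ω j; Pr] = 0 := by
    refine fun i j => hWcov i (hY2 j) ?_
    have := congrFun₂ hcov i j
    simp only [covM, Matrix.diagonal_mul, Matrix.of_apply, hmY, mul_zero, sub_zero] at this
    simp_rw [this, mul_assoc, integral_const_mul]
  have hWY : IndepFun (fun ω i => Z ω i - ρ i * Y ω i) Y Pr :=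
    HasGaussianLaw.indepFun_of_covariance_eval (X := fun i ω => Z ω i - ρ i * Y ω i)
      (Y := fun j ω => Y ω j)
      (hpair.map_fun ((ContinuousLinearMap.fst ℝ _ _).prod
        ((ContinuousLinearMap.pi fun j => ContinuousLinearMap.proj (Sum.inl j)).comp
          (ContinuousLinearMap.snd ℝ _ _)))) hWYcov
  have hWXcov : ∀ i j, cov[fun ω => Z ω i - ρ i * Y ω i, fun ω => X ω j; Pr] = 0 := by
    refine fun i j => hWcov i (hX2 j) ?_
    have hYi : Measurable[MeasurableSpace.comap Y inferInstance] fun ω => ρ i * Y ω i :=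
      ((measurable_pi_apply i).comp (comap_measurable Y)).const_mul _
    exact integral_mul_eq_of_condIndepFun hY (by fun_prop) (by fun_prop) hYi (hZ2 i) (hX2 j)
      (hYρ2 i) (hCI.comp (measurable_pi_apply i) (measurable_pi_apply j))
      (hWY.comp (measurable_pi_apply i) measurable_id) (hWm i)
  have hWYX := HasGaussianLaw.indepFun_of_covariance_eval
    (X := fun i ω => Z ω i - ρ i * Y ω i) (Y := fun j ω => Sum.elim (Y ω) (X ω) j) hpair
    (by rintro i (j | j); exacts [hWYcov i j, hWXcov i j])
  have hmarg : IndepFun (fun ω (j : Fin m) => Z ω (e j) - ρ (e j) * Y ω (e j))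
      (fun ω => (fun j : Fin m => Y ω (e j), fun j : Fin m => X ω (e j))) Pr :=
    hWYX.comp (φ := fun (w : Fin d → ℝ) (j : Fin m) => w (e j))
      (ψ := fun v : Fin d ⊕ Fin d → ℝ =>
        (fun j : Fin m => v (Sum.inl (e j)), fun j : Fin m => v (Sum.inr (e j))))
      (by fun_prop) (by fun_prop)
  have hres := hmarg.condIndepFun_comp
    (φ := fun (p : (Fin m → ℝ) × (Fin m → ℝ)) j => p.1 j + ρ (e j) * p.2 j)
    (by fun_prop) (by fun_prop) (by fun_prop) (by fun_prop)
  simpa only [sub_add_cancel] using hres
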